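/- Let X be a real Banach space that is ρ-convex and σ-smooth with σ ≤ p ≤ ρ, and let M be a closed linear subspace of X. Then for every R > 0 there exist constants C₁, C₂ > 0 such that for all x ∈ X with ‖x‖ < R: C₁ · D_p(Π_M^p x, x)^{1/ρ} ≥ dist(x,M) and dist(x,M) ≥ C₂ · D_p(Π_M^p x, x)^{1/σ}. -/

import Mathlib

open Filter Topology

noncomputable section

/-- The modulus of convexity of a normed space `X`. -/
def modConvex (X : Type*) [NormedAddCommGroup X] (ε : ℝ) : ℝ :=
  sInf {d : ℝ | ∃ x y : X, ‖x‖ = 1 ∧ ‖y‖ = 1 ∧ ε ≤ ‖x - y‖ ∧ d = 1 - ‖x + y‖ / 2}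

/-- The modulus of smoothness of a normed space `X`. -/
def modSmooth (X : Type*) [NormedAddCommGroup X] [NormedSpace ℝ X] (τ : ℝ) : ℝ :=
  sSup {d : ℝ | ∃ x y : X, ‖x‖ = 1 ∧ ‖y‖ = 1 ∧ d = (‖x + τ • y‖ + ‖x - τ • y‖) / 2 - 1}

/-- `X` is uniformly convex: the modulus of convexity is positive for positive ε. -/
def UnifConvex (X : Type*) [NormedAddCommGroup X] : Prop :=
  ∀ ε : ℝ, 0 < ε → ε ≤ 2 → 0 < modConvex X ε

/-- `X` is uniformly smooth: `ρ_X(τ)/τ → 0` as `τ → 0⁺`. -/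
def UnifSmooth (X : Type*) [NormedAddCommGroup X] [NormedSpace ℝ X] : Prop :=
  Tendsto (fun τ => modSmooth X τ / τ) (𝓝[>] (0 : ℝ)) (𝓝 0)

/-- `X` is uniformly convex of power type `ρ`. -/
def PowerConvex (X : Type*) [NormedAddCommGroup X] (ρ : ℝ) : Prop :=
  ∃ c > (0 : ℝ), ∀ ε ∈ Set.Icc (0 : ℝ) 2, c * ε ^ ρ ≤ modConvex X ε

/-- `X` is uniformly smooth of power type `σ` (with `σ > 1`). -/
def PowerSmooth (X : Type*) [NormedAddCommGroup X] [NormedSpace ℝ X] (σ : ℝ) : Prop :=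
  1 < σ ∧ ∃ C > (0 : ℝ), ∀ τ ∈ Set.Icc (0 : ℝ) 1, modSmooth X τ ≤ C * τ ^ σ

variable {X : Type*} [NormedAddCommGroup X] [NormedSpace ℝ X]

/-- The duality mapping `j_p`, the Fréchet derivative of `x ↦ (1/p)‖x‖^p`. -/
def dualityMap (p : ℝ) (x : X) : X →L[ℝ] ℝ :=
  fderiv ℝ (fun y : X => 1 / p * ‖y‖ ^ p) x

/-- The Bregman distance `D_p(x, y)`. -/
def bregmanDist (p : ℝ) (x y : X) : ℝ :=
  1 / p * ‖x‖ ^ p - 1 / p * ‖y‖ ^ p - dualityMap p y (x - y)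

/-- The Bregman projection of `x` onto the set `S`: the minimizer of `m ↦ D_p(m, x)` over `S`. -/
def bregmanProj (p : ℝ) (S : Set X) (x : X) : X :=
  letI : Nonempty X := ⟨x⟩
  Classical.epsilon fun y => y ∈ S ∧ ∀ m ∈ S, bregmanDist p y x ≤ bregmanDist p m x

/-- The Bregman distance `D_p(S, x)` from the point `x` to the set `S`. -/
def bregmanDistSet (p : ℝ) (S : Set X) (x : X) : ℝ :=
  bregmanDist p (bregmanProj p S x) x

/-- The metric projection of `x` onto the set `S`: the point of `S` nearest to `x`. -/
def metricProj (S : Set X) (x : X) : X :=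
  letI : Nonempty X := ⟨x⟩
  Classical.epsilon fun y => y ∈ S ∧ ∀ m ∈ S, ‖x - y‖ ≤ ‖x - m‖

section Aux

lemma aux_tangent {p A B : ℝ} (hp : 1 < p) (hA : 0 ≤ A) (hB : 0 ≤ B) :
    B ^ p + p * B ^ (p - 1) * (A - B) ≤ A ^ p := by
  rcases hB.eq_or_lt with h | h
  · subst h
    rw [Real.zero_rpow (by linarith), Real.zero_rpow (by linarith)]
    have := Real.rpow_nonneg hA p
    simpa using this
  · have h1 := one_add_mul_self_le_rpow_one_add (s := A / B - 1) (by
      have : 0 ≤ A / B := by positivity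
      linarith) hp.le
    have e : 1 + (A / B - 1) = A / B := by ring
    rw [e, Real.div_rpow hA hB, le_div_iff₀ (by positivity)] at h1
    have e2 : B ^ p = B ^ (p - 1) * B := by
      rw [← Real.rpow_add_one h.ne']; ring_nf
    calc _ = (1 + p * (A / B - 1)) * B ^ p := by
          rw [e2]; field_simp
      _ ≤ _ := h1

lemma aux_upper {p a : ℝ} (hp : 1 < p) (ha : -1 ≤ a) (ha' : a ≤ 1) :
    (1 + a) ^ p ≤ 1 + p * a + p ^ 2 * (2 ^ p + p) * a ^ 2 := by
  have h2 : (1:ℝ) ≤ 2 ^ p := Real.one_le_rpow (by norm_num) (by linarith)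
  by_cases h : |p * a| ≤ 1
  · have h1 := Real.abs_exp_sub_one_sub_id_le h
    have h3 : (1 + a) ^ p ≤ Real.exp (p * a) := by
      rw [mul_comm, Real.exp_mul]
      apply Real.rpow_le_rpow (by linarith) _ (by linarith)
      linarith [Real.add_one_le_exp a]
    have h4 := (abs_le.1 h1).2
    have h5 : (p * a) ^ 2 ≤ p ^ 2 * (2 ^ p + p) * a ^ 2 := by
      have : 0 ≤ (p * a) ^ 2 := by positivity
      nlinarith
    linarith
  · push Not at h
    have h3 : (1 + a) ^ p ≤ 2 ^ p := Real.rpow_le_rpow (by linarith) (by linarith) (by linarith)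
    have h4 : 1 ≤ (p * a) ^ 2 := by
      rw [← sq_abs]; nlinarith
    have h5 : p ^ 2 * (2 ^ p + p) * a ^ 2 = (2 ^ p + p) * (p * a) ^ 2 := by ring
    rw [h5]
    nlinarith

lemma aux_diff {q z : ℝ} (hq : 0 < q) (hz : 0 ≤ z) (hz1 : z ≤ 1) :
    min q 1 * z ≤ (1 + z) ^ q - (1 - z) ^ q := by
  rcases le_total q 1 with h | h
  · rw [min_eq_left h]
    have h1 := rpow_one_add_le_one_add_mul_self (s := -z) (by linarith) hq.le h
    have h2 : 1 ≤ (1 + z) ^ q := Real.one_le_rpow (by linarith) hq.le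
    rw [← sub_eq_add_neg] at h1
    linarith
  · rw [min_eq_right h]
    have h1 := one_add_mul_self_le_rpow_one_add (s := z) (by linarith) h
    have h2 : (1 - z) ^ q ≤ 1 := Real.rpow_le_one (by linarith) (by linarith) hq.le
    nlinarith

lemma aux_quad {p z : ℝ} (hp : 1 < p) (hz : 0 ≤ z) (hz1 : z ≤ 1) :
    p * min (p - 1) 1 / 4 * z ^ 2 ≤ (1 + z) ^ p + (1 - z) ^ p - 2 := by
  have h1 := aux_tangent (A := 1 + z) (B := 1 + z / 2) hp (by linarith) (by linarith)
  have h2 := aux_tangent (A := 1 - z) (B := 1 - z / 2) hp (by linarith) (by linarith)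
  have h3 := one_add_mul_self_le_rpow_one_add (s := z / 2) (by linarith) hp.le
  have h4 := one_add_mul_self_le_rpow_one_add (s := -(z / 2)) (by linarith) hp.le
  have h5 := aux_diff (q := p - 1) (z := z / 2) (by linarith) (by linarith) (by linarith)
  rw [← sub_eq_add_neg] at h4
  have h6 := mul_le_mul_of_nonneg_left h5 (show 0 ≤ p * (z / 2) by positivity)
  nlinarith

lemma aux_midpow {p l : ℝ} (hp : 1 < p) (hl : 0 ≤ l) (hl1 : l ≤ 1) :
    p * min (p - 1) 1 / 32 * (1 / 2) ^ p * (1 - l) ^ 2 ≤ (1 + l ^ p) / 2 - ((1 + l) / 2) ^ p := by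
  set w := (1 + l) / 2 with hw
  have hw0 : 0 < w := by rw [hw]; linarith
  set z := (1 - l) / (1 + l) with hz
  have hl' : 0 < 1 + l := by linarith
  have h1 := aux_quad (z := z) hp (by rw [hz]; apply div_nonneg <;> linarith)
    (by rw [hz, div_le_one hl']; linarith)
  have hz1 : z ≤ 1 := by rw [hz, div_le_one hl']; linarith
  have hz0 : 0 ≤ z := by rw [hz]; apply div_nonneg <;> linarith
  have e1 : w ^ p * (1 + z) ^ p = 1 := by
    rw [← Real.mul_rpow hw0.le (by linarith)]
    have : w * (1 + z) = 1 := by rw [hw, hz]; field_simp; ring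
    rw [this, Real.one_rpow]
  have e2 : w ^ p * (1 - z) ^ p = l ^ p := by
    rw [← Real.mul_rpow hw0.le (by linarith)]
    have : w * (1 - z) = l := by rw [hw, hz]; field_simp; ring
    rw [this]
  have hk : 0 < p * min (p - 1) 1 := mul_pos (by linarith) (lt_min (by linarith) one_pos)
  have h2 : (1 / 2 : ℝ) ^ p ≤ w ^ p := Real.rpow_le_rpow (by norm_num) (by rw [hw]; linarith) (by linarith)
  have h3 : (1 - l) ^ 2 / 4 ≤ z ^ 2 := by
    rw [hz, div_pow]
    apply div_le_div_of_nonneg_left (by positivity) (by positivity)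
    nlinarith
  have h4 := mul_le_mul_of_nonneg_left h1 (show 0 ≤ w ^ p by positivity)
  have h5 : (1 / 2 : ℝ) ^ p * ((1 - l) ^ 2 / 4) ≤ w ^ p * z ^ 2 :=
    mul_le_mul h2 h3 (by positivity) (by positivity)
  have h6 := mul_le_mul_of_nonneg_left h5 (show 0 ≤ p * min (p - 1) 1 / 4 by positivity)
  have e3 : w ^ p * ((1 + z) ^ p + (1 - z) ^ p - 2) = 1 + l ^ p - 2 * w ^ p := by
    linear_combination e1 + e2
  rw [e3] at h4
  linarith

lemma aux_iter (g : ℝ → ℝ) (n : ℕ) : ∀ (h B : ℝ), 0 < h →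
    (∀ t, |t| + h ≤ 1 → B ≤ g (t + h) + g (t - h) - 2 * g t) →
    ∀ t, |t| + 2 ^ n * h ≤ 1 → 4 ^ n * B ≤ g (t + 2 ^ n * h) + g (t - 2 ^ n * h) - 2 * g t := by
  induction n with
  | zero => intro h B hh H t ht; simpa using H t (by simpa using ht)
  | succ n ih =>
    intro h B hh H t ht
    have ih := ih h B hh H
    set k := 2 ^ n * h with hk
    have hk0 : 0 < k := by positivity
    have e : (2:ℝ) ^ (n + 1) * h = 2 * k := by rw [hk]; ring
    rw [e] at ht ⊢
    have a1 : |t + k| ≤ |t| + k := (abs_add_le _ _).trans (by rw [abs_of_pos hk0])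
    have a2 : |t - k| ≤ |t| + k := (abs_sub _ _).trans (by rw [abs_of_pos hk0])
    have h1 := ih (t + k) (by linarith)
    have h2 := ih (t - k) (by linarith)
    have h3 := ih t (by linarith)
    have e1 : t + k + k = t + 2 * k := by ring
    have e2 : t + k - k = t := by ring
    have e3 : t - k + k = t := by ring
    have e4 : t - k - k = t - 2 * k := by ring
    rw [e1, e2] at h1
    rw [e3, e4] at h2
    rw [pow_succ]
    linarith

lemma aux_iter_one (g : ℝ → ℝ) (n : ℕ) (B : ℝ)
    (H : ∀ t, |t| + (1 / 2) ^ n ≤ 1 →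
      B ≤ g (t + (1 / 2) ^ n) + g (t - (1 / 2) ^ n) - 2 * g t) :
    4 ^ n * B ≤ g 1 + g (-1) - 2 * g 0 := by
  have h := aux_iter g n ((1 / 2) ^ n) B (by positivity) H 0
  have e : (2:ℝ) ^ n * (1 / 2) ^ n = 1 := by rw [← mul_pow]; norm_num
  rw [e] at h
  simpa using h (by simp)

variable {E : Type*} [NormedAddCommGroup E] [NormedSpace ℝ E]

lemma aux_conv {ρ : ℝ} (h : PowerConvex E ρ) :
    ∃ c > (0 : ℝ), ∀ x y : E, ‖x‖ = 1 → ‖y‖ = 1 → c * ‖x - y‖ ^ ρ ≤ 1 - ‖x + y‖ / 2 := by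
  obtain ⟨c, hc, H⟩ := h
  refine ⟨c, hc, fun x y hx hy => (H ‖x - y‖ ⟨norm_nonneg _, ?_⟩).trans (csInf_le ⟨0, ?_⟩ ?_)⟩
  · linarith [norm_sub_le x y]
  · rintro d ⟨x, y, hx, hy, -, rfl⟩
    linarith [norm_add_le x y]
  · exact ⟨x, y, hx, hy, le_rfl, rfl⟩

lemma aux_smooth {σ : ℝ} (h : PowerSmooth E σ) :
    ∃ C > (0 : ℝ), ∀ x h : E, 0 < ‖x‖ → ‖h‖ ≤ ‖x‖ →
      ‖x + h‖ + ‖x - h‖ ≤ 2 * ‖x‖ + 2 * C * ‖x‖ * (‖h‖ / ‖x‖) ^ σ := by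
  obtain ⟨hσ, C, hC, H⟩ := h
  refine ⟨C, hC, fun x h hx hh => ?_⟩
  rcases eq_or_ne h 0 with rfl | h0
  · simp [Real.zero_rpow (show σ ≠ 0 by linarith)]; linarith
  have h0' : 0 < ‖h‖ := norm_pos_iff.2 h0
  set τ := ‖h‖ / ‖x‖ with hτ
  have hτ0 : 0 < τ := by positivity
  have hτ1 : τ ≤ 1 := (div_le_one hx).2 hh
  have key : (‖‖x‖⁻¹ • x + τ • (‖h‖⁻¹ • h)‖ + ‖‖x‖⁻¹ • x - τ • (‖h‖⁻¹ • h)‖) / 2 - 1 ≤ C * τ ^ σ := by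
    refine le_trans (le_csSup ⟨τ, ?_⟩ ?_) (H τ ⟨hτ0.le, hτ1⟩)
    · rintro d ⟨x, y, hx, hy, rfl⟩
      have e : ‖τ • y‖ = τ := by rw [norm_smul, hy, mul_one, Real.norm_of_nonneg hτ0.le]
      have := norm_add_le x (τ • y)
      have := norm_sub_le x (τ • y)
      rw [e] at *
      linarith
    · refine ⟨_, _, ?_, ?_, rfl⟩
      · rw [norm_smul, norm_inv, norm_norm, inv_mul_cancel₀ hx.ne']
      · rw [norm_smul, norm_inv, norm_norm, inv_mul_cancel₀ h0'.ne']
  have e1 : τ • (‖h‖⁻¹ • h) = ‖x‖⁻¹ • h := by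
    rw [smul_smul, hτ]; congr 1; field_simp
  rw [e1, ← smul_add, ← smul_sub, norm_smul, norm_smul, norm_inv, norm_norm] at key
  have k2 := mul_le_mul_of_nonneg_left key (show 0 ≤ 2 * ‖x‖ by positivity)
  have e2 : 2 * ‖x‖ * ((‖x‖⁻¹ * ‖x + h‖ + ‖x‖⁻¹ * ‖x - h‖) / 2 - 1) = ‖x + h‖ + ‖x - h‖ - 2 * ‖x‖ := by
    field_simp
  rw [e2] at k2
  linarith

/-- improved triangle inequality -/
lemma aux_tri {ρ c : ℝ} (hc : ∀ x y : E, ‖x‖ = 1 → ‖y‖ = 1 → c * ‖x - y‖ ^ ρ ≤ 1 - ‖x + y‖ / 2)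
    (a b : E) (hb : 0 < ‖b‖) (hab : ‖b‖ ≤ ‖a‖) :
    ‖a + b‖ ≤ ‖a‖ + ‖b‖ - 2 * c * ‖b‖ * ‖‖a‖⁻¹ • a - ‖b‖⁻¹ • b‖ ^ ρ := by
  have ha : 0 < ‖a‖ := hb.trans_le hab
  have na : ‖‖a‖⁻¹ • a‖ = 1 := by rw [norm_smul, norm_inv, norm_norm, inv_mul_cancel₀ ha.ne']
  have nb : ‖‖b‖⁻¹ • b‖ = 1 := by rw [norm_smul, norm_inv, norm_norm, inv_mul_cancel₀ hb.ne']
  have h := hc _ _ na nb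
  have e : a + b = (‖a‖ - ‖b‖) • (‖a‖⁻¹ • a) + ‖b‖ • (‖a‖⁻¹ • a + ‖b‖⁻¹ • b) := by
    rw [smul_add, smul_smul ‖b‖ ‖b‖⁻¹, mul_inv_cancel₀ hb.ne', one_smul, ← add_assoc, ← add_smul,
      sub_add_cancel, smul_smul, mul_inv_cancel₀ ha.ne', one_smul]
  have h2 := norm_add_le ((‖a‖ - ‖b‖) • (‖a‖⁻¹ • a)) (‖b‖ • (‖a‖⁻¹ • a + ‖b‖⁻¹ • b))
  rw [← e, norm_smul, na, norm_smul, norm_norm, Real.norm_of_nonneg (sub_nonneg.2 hab)] at h2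
  have h3 := mul_le_mul_of_nonneg_left h (show 0 ≤ 2 * ‖b‖ by positivity)
  linarith

lemma aux_sigma_le {σ C d : ℝ} (hσ : 1 < σ) (hC : 0 < C)
    (H : ∀ x h : E, 0 < ‖x‖ → ‖h‖ ≤ ‖x‖ →
      ‖x + h‖ + ‖x - h‖ ≤ 2 * ‖x‖ + 2 * C * ‖x‖ * (‖h‖ / ‖x‖) ^ σ)
    (x y : E) (hd : 0 < d) (hxy : ∀ t : ℝ, d ≤ ‖x + t • y‖) (hy : 2 * ‖x‖ < ‖y‖) : σ ≤ 2 := by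
  by_contra! hs
  set g : ℝ → ℝ := fun t => -‖x + t • y‖ with hg
  set K := 2 * C * d * (‖y‖ / d) ^ σ with hK
  have hy0 : 0 < ‖y‖ := (by positivity : 0 ≤ 2 * ‖x‖).trans_lt hy
  have hK0 : 0 < K := by positivity
  have main : ∀ n : ℕ, (1 / 2 : ℝ) ^ n * ‖y‖ ≤ d →
      2 * (‖y‖ - 2 * ‖x‖) ≤ K * (4 * (1 / 2) ^ σ) ^ n := by
    intro n hn
    set h : ℝ := (1 / 2) ^ n with hh
    have hh0 : 0 < h := by positivity
    have := aux_iter_one g n (-(K * h ^ σ)) (fun t _ => by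
      have hz := hxy t
      have nh : ‖h • y‖ = h * ‖y‖ := by rw [norm_smul, Real.norm_of_nonneg hh0.le]
      have h1 := H (x + t • y) (h • y) (hd.trans_le hz) (by rw [nh]; linarith)
      rw [nh] at h1
      simp only [hg]
      rw [add_smul, sub_smul, ← add_assoc, ← add_sub_assoc]
      have hz0 : 0 < ‖x + t • y‖ := hd.trans_le hz
      have h2 : ‖x + t • y‖ * (h * ‖y‖ / ‖x + t • y‖) ^ σ ≤ d * (‖y‖ / d) ^ σ * h ^ σ := by
        rw [mul_assoc, ← Real.mul_rpow (by positivity) hh0.le]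
        have e : ∀ s : ℝ, 0 < s → s * (h * ‖y‖ / s) ^ σ = (h * ‖y‖) ^ σ * s ^ (1 - σ) := by
          intro s hs
          rw [Real.div_rpow (by positivity) hs.le, Real.rpow_sub hs, Real.rpow_one]
          ring
        rw [e _ hz0, show ‖y‖ / d * h = h * ‖y‖ / d by ring, e _ hd]
        apply mul_le_mul_of_nonneg_left _ (by positivity)
        exact Real.rpow_le_rpow_of_nonpos hd hz (by linarith)
      rw [hK]
      nlinarith)
    simp only [hg] at this
    have e1 : (4:ℝ) ^ n * -(K * h ^ σ) = -(K * (4 * (1 / 2) ^ σ) ^ n) := by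
      rw [hh, mul_pow, ← Real.rpow_natCast, ← Real.rpow_natCast, ← Real.rpow_natCast, ← Real.rpow_mul (by norm_num), ← Real.rpow_mul (by norm_num)]
      ring_nf
    rw [e1] at this
    have n1 : ‖y‖ - ‖x‖ ≤ ‖x + (1:ℝ) • y‖ := by
      have := norm_sub_norm_le y (-x)
      rw [sub_neg_eq_add, norm_neg, add_comm y x] at this
      simpa using this
    have n2 : ‖y‖ - ‖x‖ ≤ ‖x + (-1:ℝ) • y‖ := by
      have := norm_sub_norm_le y x
      rw [norm_sub_rev] at this
      simpa [← sub_eq_add_neg] using this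
    simp only [zero_smul, add_zero] at this
    linarith
  have hr : 4 * (1 / 2 : ℝ) ^ σ < 1 := by
    have : (1 / 2 : ℝ) ^ σ < (1 / 2 : ℝ) ^ (2:ℝ) :=
      Real.rpow_lt_rpow_of_exponent_gt (by norm_num) (by norm_num) hs
    norm_num at this ⊢
    linarith
  have T1 : Tendsto (fun n : ℕ => (1 / 2 : ℝ) ^ n * ‖y‖) atTop (𝓝 (0 * ‖y‖)) :=
    (tendsto_pow_atTop_nhds_zero_of_lt_one (by norm_num) (by norm_num)).mul_const _
  have T2 : Tendsto (fun n : ℕ => K * (4 * (1 / 2 : ℝ) ^ σ) ^ n) atTop (𝓝 (K * 0)) :=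
    (tendsto_pow_atTop_nhds_zero_of_lt_one (by positivity) hr).const_mul _
  rw [zero_mul] at T1
  rw [mul_zero] at T2
  obtain ⟨n, h1, h2⟩ := ((T1.eventually_lt_const hd).and
    (T2.eventually_lt_const (show 0 < 2 * (‖y‖ - 2 * ‖x‖) by linarith))).exists
  linarith [main n h1.le]

lemma aux_rho_ge {ρ c d : ℝ} (hρ : 1 < ρ) (hc0 : 0 < c)
    (hc : ∀ x y : E, ‖x‖ = 1 → ‖y‖ = 1 → c * ‖x - y‖ ^ ρ ≤ 1 - ‖x + y‖ / 2)
    (x y : E) (hd : 0 < d) (hxy : ∀ t : ℝ, d ≤ ‖x + t • y‖) (hy : y ≠ 0) : 2 ≤ ρ := by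
  by_contra! hs
  have hy0 : 0 < ‖y‖ := norm_pos_iff.2 hy
  set g : ℝ → ℝ := fun t => ‖x + t • y‖ with hg
  have hk : ∀ κ μ : ℝ, d * |κ| ≤ ‖κ • x + μ • y‖ := by
    intro κ μ
    rcases eq_or_ne κ 0 with rfl | h
    · simp
    · have := mul_le_mul_of_nonneg_left (hxy (μ / κ)) (abs_nonneg κ)
      rw [← Real.norm_eq_abs, ← norm_smul, smul_add, smul_smul, mul_div_cancel₀ _ h] at this
      rw [← Real.norm_eq_abs]; linarith
  set N := ‖x‖ + ‖y‖ with hN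
  have hN0 : 0 < N := by positivity
  set k := (2 * ‖y‖ / N) / (1 + N / d) with hkdef
  have hk0 : 0 < k := by positivity
  have ang : ∀ a b t h : ℝ, 0 < a → a ≤ N → 0 < b → 0 < h → |t - h| ≤ 1 →
      k * h ≤ ‖a⁻¹ • (x + (t + h) • y) - b⁻¹ • (x + (t - h) • y)‖ := by
    intro a b t h ha haN hb hh ht
    set e := ‖a⁻¹ • (x + (t + h) • y) - b⁻¹ • (x + (t - h) • y)‖ with he
    have e1 : a⁻¹ • (x + (t + h) • y) - b⁻¹ • (x + (t - h) • y) =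
        (a⁻¹ - b⁻¹) • x + (2 * h / a + (a⁻¹ - b⁻¹) * (t - h)) • y := by
      module
    set κ := a⁻¹ - b⁻¹
    have h1 : d * |κ| ≤ e := by rw [he, e1]; exact hk _ _
    have h2 : 2 * h / a * ‖y‖ ≤ e + |κ| * N := by
      have e2 : (2 * h / a) • y = (κ • x + (2 * h / a + κ * (t - h)) • y) - κ • (x + (t - h) • y) := by
        module
      have : ‖(2 * h / a) • y‖ ≤ e + ‖κ • (x + (t - h) • y)‖ := by
        rw [he, e1]; conv_lhs => rw [e2]
        exact norm_sub_le _ _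
      rw [norm_smul, norm_smul, Real.norm_of_nonneg (by positivity), Real.norm_eq_abs] at this
      have h3 : ‖x + (t - h) • y‖ ≤ N := by
        refine (norm_add_le _ _).trans ?_
        rw [norm_smul, Real.norm_eq_abs, hN]
        nlinarith
      have := mul_le_mul_of_nonneg_left h3 (abs_nonneg κ)
      linarith
    have h3 : 2 * h / N * ‖y‖ ≤ 2 * h / a * ‖y‖ := by gcongr
    have h4 : |κ| ≤ e / d := by rw [le_div_iff₀ hd]; linarith
    have h5 : 2 * h / N * ‖y‖ ≤ e * (1 + N / d) := by
      have := mul_le_mul_of_nonneg_right h4 hN0.le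
      calc _ ≤ e + e / d * N := by linarith
        _ = _ := by ring
    rw [hkdef, div_mul_eq_mul_div, div_le_iff₀ (by positivity)]
    calc _ = 2 * h / N * ‖y‖ := by ring
      _ ≤ _ := h5
  have main : ∀ n : ℕ, 2 * c * d * k ^ ρ * (4 * (1 / 2) ^ ρ) ^ n ≤ g 1 + g (-1) - 2 * g 0 := by
    intro n
    set h : ℝ := (1 / 2) ^ n with hh
    have hh0 : 0 < h := by positivity
    have := aux_iter_one g n (2 * c * d * k ^ ρ * h ^ ρ) (fun t ht => by
      rw [← hh] at ht ⊢
      simp only [hg]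
      have b1 : |t - h| ≤ 1 := (abs_sub _ _).trans (by rwa [abs_of_pos hh0])
      have b2 : |t + h| ≤ 1 := (abs_add_le _ _).trans (by rwa [abs_of_pos hh0])
      have hN' : ∀ s : ℝ, |s| ≤ 1 → ‖x + s • y‖ ≤ N := by
        intro s hs
        refine (norm_add_le _ _).trans ?_
        rw [norm_smul, Real.norm_eq_abs, hN]
        nlinarith
      have da := hxy (t + h)
      have db := hxy (t - h)
      have A := ang ‖x + (t + h) • y‖ ‖x + (t - h) • y‖ t h (by linarith) (hN' _ b2) (by linarith) hh0 b1
      have A' : (k * h) ^ ρ ≤ _ := Real.rpow_le_rpow (by positivity) A (by linarith : 0 ≤ ρ)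
      rw [Real.mul_rpow hk0.le hh0.le] at A'
      have e2 : ‖(x + (t + h) • y) + (x + (t - h) • y)‖ = 2 * ‖x + t • y‖ := by
        have : (x + (t + h) • y) + (x + (t - h) • y) = (2:ℝ) • (x + t • y) := by module
        rw [this, norm_smul]; norm_num
      rcases le_total ‖x + (t - h) • y‖ ‖x + (t + h) • y‖ with hle | hle
      · have T := aux_tri hc _ _ (by linarith) hle
        rw [e2] at T
        have := mul_le_mul db A' (by positivity) (by positivity)
        have := mul_le_mul_of_nonneg_left this (show 0 ≤ 2 * c by positivity)
        linarith
      · have T := aux_tri hc _ _ (by linarith) hle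
        rw [add_comm (x + (t - h) • y), norm_sub_rev, e2] at T
        have := mul_le_mul da A' (by positivity) (by positivity)
        have := mul_le_mul_of_nonneg_left this (show 0 ≤ 2 * c by positivity)
        linarith)
    refine le_trans (le_of_eq ?_) this
    rw [hh, mul_pow, ← Real.rpow_natCast (1/2), ← Real.rpow_natCast _ n, ← Real.rpow_natCast _ n, ← Real.rpow_mul (by norm_num), ← Real.rpow_mul (by norm_num)]
    ring_nf
  have hr : 1 < 4 * (1 / 2 : ℝ) ^ ρ := by
    have : (1 / 2 : ℝ) ^ (2:ℝ) < (1 / 2 : ℝ) ^ ρ :=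
      Real.rpow_lt_rpow_of_exponent_gt (by norm_num) (by norm_num) hs
    norm_num at this ⊢
    linarith
  have T := (tendsto_pow_atTop_atTop_of_one_lt hr).const_mul_atTop
    (show 0 < 2 * c * d * k ^ ρ by positivity)
  obtain ⟨n, hn⟩ := (T.eventually_gt_atTop (g 1 + g (-1) - 2 * g 0)).exists
  linarith [main n]

lemma aux_S {σ p C R : ℝ} (hσ : 1 < σ) (hσ2 : σ ≤ 2) (hσp : σ ≤ p) (hC : 0 < C) (hR : 0 < R)
    (H : ∀ x h : E, 0 < ‖x‖ → ‖h‖ ≤ ‖x‖ →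
      ‖x + h‖ + ‖x - h‖ ≤ 2 * ‖x‖ + 2 * C * ‖x‖ * (‖h‖ / ‖x‖) ^ σ) :
    ∃ K > (0 : ℝ), ∀ x h : E, ‖x‖ ≤ R → ‖h‖ ≤ R →
      ‖x + h‖ ^ p + ‖x - h‖ ^ p - 2 * ‖x‖ ^ p ≤ K * ‖h‖ ^ σ := by
  have hp : 1 < p := by linarith
  set Q := p ^ 2 * (2 ^ p + p) with hQ
  have hQ0 : 0 < Q := by positivity
  set K1 := 2 * 3 ^ p * R ^ (p - σ) with hK1
  set K2 := (2 * p * C + 2 * Q) * R ^ (p - σ) with hK2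
  have hK10 : 0 < K1 := by positivity
  have hK20 : 0 < K2 := by positivity
  refine ⟨K1 + K2, by positivity, fun x h hx hh => ?_⟩
  have n1 := norm_add_le x h
  have n2 := norm_sub_le x h
  rcases le_or_gt ‖x‖ (2 * ‖h‖) with hc | hc
  · have a1 : ‖x + h‖ ^ p ≤ (3 * ‖h‖) ^ p := Real.rpow_le_rpow (norm_nonneg _) (by linarith) (by linarith)
    have a2 : ‖x - h‖ ^ p ≤ (3 * ‖h‖) ^ p := Real.rpow_le_rpow (norm_nonneg _) (by linarith) (by linarith)
    rw [Real.mul_rpow (by norm_num) (norm_nonneg _)] at a1 a2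
    have a3 : 0 ≤ ‖x‖ ^ p := by positivity
    have a4 : ‖h‖ ^ p ≤ R ^ (p - σ) * ‖h‖ ^ σ := by
      have : ‖h‖ ^ p = ‖h‖ ^ (p - σ) * ‖h‖ ^ σ := by
        rw [← Real.rpow_add_of_nonneg (norm_nonneg _) (by linarith) (by linarith)]; ring_nf
      rw [this]
      gcongr
    have a5 : 2 * 3 ^ p * ‖h‖ ^ p ≤ K1 * ‖h‖ ^ σ := by
      rw [hK1, mul_assoc _ (R ^ _)]; gcongr
    have a6 : 0 ≤ K2 * ‖h‖ ^ σ := by positivity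
    linarith
  · have hs : 0 < ‖x‖ := by linarith [norm_nonneg h]
    set s := ‖x‖ with hsd
    have h1 := H x h hs (by linarith [norm_nonneg h])
    rw [← hsd] at h1
    set τ := ‖h‖ / s with hτ
    have hτ0 : 0 ≤ τ := by positivity
    have hτ1 : τ ≤ 1 := by rw [hτ, div_le_one hs]; linarith [norm_nonneg h]
    have hh' : ‖h‖ = s * τ := by rw [hτ]; field_simp
    have m1 : s - ‖h‖ ≤ ‖x + h‖ := by
      have := norm_sub_norm_le x (-h)
      rwa [norm_neg, sub_neg_eq_add] at this
    have m2 : s - ‖h‖ ≤ ‖x - h‖ := norm_sub_norm_le x h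
    have key : ∀ u : ℝ, 0 ≤ u → s - ‖h‖ ≤ u → u ≤ s + ‖h‖ →
        u ^ p ≤ s ^ p * (1 + p * (u / s - 1) + Q * τ ^ 2) := by
      intro u hu0 hu1 hu2
      have b1 : -τ ≤ u / s - 1 := by
        rw [hτ, neg_le_sub_iff_le_add, ← add_div, le_div_iff₀ hs]; linarith
      have b2 : u / s - 1 ≤ τ := by
        rw [hτ, sub_le_iff_le_add, div_add' _ _ _ hs.ne', div_le_div_iff_of_pos_right hs]; linarith
      have b3 := aux_upper (p := p) (a := u / s - 1) hp (by linarith) (by linarith)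
      have b4 : (u / s - 1) ^ 2 ≤ τ ^ 2 := sq_le_sq' b1 b2
      have b5 : u ^ p = s ^ p * (1 + (u / s - 1)) ^ p := by
        rw [← Real.mul_rpow hs.le (by rw [add_sub_cancel]; positivity)]
        congr 1; field_simp; ring
      rw [b5]
      apply mul_le_mul_of_nonneg_left _ (by positivity)
      have := mul_le_mul_of_nonneg_left b4 hQ0.le
      linarith
    have k1 := key _ (norm_nonneg _) m1 n1
    have k2 := key _ (norm_nonneg _) m2 n2
    have k3 : (‖x + h‖ / s - 1) + (‖x - h‖ / s - 1) ≤ 2 * C * τ ^ σ := by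
      have : (‖x + h‖ / s - 1) + (‖x - h‖ / s - 1) = (‖x + h‖ + ‖x - h‖ - 2 * s) / s := by
        field_simp; ring
      rw [this, div_le_iff₀ hs]; linarith
    have k4 : τ ^ 2 ≤ τ ^ σ := by
      rw [← Real.rpow_two]
      exact Real.rpow_le_rpow_of_exponent_ge' hτ0 hτ1 (by linarith) hσ2
    have k5 : s ^ p * τ ^ σ ≤ R ^ (p - σ) * ‖h‖ ^ σ := by
      rw [hh', Real.mul_rpow hs.le hτ0, ← mul_assoc]
      have : s ^ p = s ^ (p - σ) * s ^ σ := by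
        rw [← Real.rpow_add hs]; ring_nf
      rw [this]
      gcongr
    have k6 : p * ((‖x + h‖ / s - 1) + (‖x - h‖ / s - 1)) + 2 * Q * τ ^ 2 ≤ (2 * p * C + 2 * Q) * τ ^ σ := by
      nlinarith
    have k7 := mul_le_mul_of_nonneg_left k6 (show 0 ≤ s ^ p by positivity)
    have k8 := mul_le_mul_of_nonneg_left k5 (show 0 ≤ 2 * p * C + 2 * Q by positivity)
    have k9 : 0 ≤ K1 * ‖h‖ ^ σ := by positivity
    rw [hK2]
    nlinarith

lemma aux_U1 {ρ p c : ℝ} (hρ2 : 2 ≤ ρ) (hp : 1 < p) (hc0 : 0 < c)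
    (hc : ∀ x y : E, ‖x‖ = 1 → ‖y‖ = 1 → c * ‖x - y‖ ^ ρ ≤ 1 - ‖x + y‖ / 2) :
    ∃ k > (0 : ℝ), ∀ a b : E, ‖a‖ = 1 → ‖b‖ ≤ 1 →
      k * ‖a - b‖ ^ ρ ≤ (1 + ‖b‖ ^ p) / 2 - (‖a + b‖ / 2) ^ p := by
  set k1 := p * min (p - 1) 1 / 32 * (1 / 2) ^ p with hk1
  have hmin : 0 < min (p - 1) 1 := lt_min (by linarith) one_pos
  have hk10 : 0 < k1 := by positivity
  set k2 := (1 / 2) ^ p * c with hk2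
  have hk20 : 0 < k2 := by positivity
  refine ⟨min k1 k2 / 2 ^ (ρ - 1), by positivity, fun a b ha hb => ?_⟩
  set l := ‖b‖ with hl
  have hl0 : 0 ≤ l := norm_nonneg _
  set e := ‖a - l⁻¹ • b‖ with he
  have he0 : 0 ≤ e := norm_nonneg _
  have tri : ‖a + b‖ ≤ 1 + l - 2 * (l * (c * e ^ ρ)) ∧ l * (c * e ^ ρ) ≤ l := by
    rcases hl0.eq_or_lt with h | h
    · rw [← h]
      have : b = 0 := norm_eq_zero.1 (by rw [← hl, ← h])
      simp [this, ha]
    · have T := aux_tri hc a b h (by rw [ha]; exact hb)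
      rw [ha, inv_one, one_smul] at T
      constructor
      · linarith
      · have nb : ‖l⁻¹ • b‖ = 1 := by rw [norm_smul, norm_inv, hl, norm_norm, inv_mul_cancel₀ h.ne']
        have := hc a (l⁻¹ • b) ha nb
        have h3 := norm_nonneg (a + l⁻¹ • b)
        have : c * e ^ ρ ≤ 1 := by linarith
        nlinarith
  obtain ⟨t1, t2⟩ := tri
  set w := (1 + l) / 2 with hw
  have hw0 : 0 < w := by positivity
  set v := l * (c * e ^ ρ) with hv
  have hv0 : 0 ≤ v := by positivity
  have hvw : v ≤ w := by rw [hw]; linarith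
  have s1 : (‖a + b‖ / 2) ^ p ≤ (w - v) ^ p :=
    Real.rpow_le_rpow (by positivity) (by rw [hw]; linarith) (by linarith)
  have s2 : (w - v) ^ p ≤ w ^ p - w ^ p * v := by
    have : w - v = w * (1 - v / w) := by field_simp
    have hvw1 : v / w ≤ 1 := (div_le_one hw0).2 hvw
    rw [this, Real.mul_rpow hw0.le (by linarith)]
    have h0 : 0 ≤ v / w := by positivity
    have h1 : (1 - v / w) ^ p ≤ 1 - v / w := by
      conv_rhs => rw [← Real.rpow_one (1 - v / w)]
      exact Real.rpow_le_rpow_of_exponent_ge' (by linarith) (by linarith) (by norm_num) hp.le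
    have h2 : v ≤ v / w := by
      rw [le_div_iff₀ hw0]
      have : w ≤ 1 := by rw [hw]; linarith
      nlinarith
    have := mul_le_mul_of_nonneg_left (h1.trans (sub_le_sub_left h2 1)) (show 0 ≤ w ^ p by positivity)
    linarith
  have s3 : (1 / 2 : ℝ) ^ p ≤ w ^ p := Real.rpow_le_rpow (by norm_num) (by rw [hw]; linarith) (by linarith)
  have s4 := aux_midpow hp hl0 hb
  rw [← hw, ← hk1] at s4
  have s5 : (l * e) ^ ρ ≤ l * e ^ ρ := by
    rw [Real.mul_rpow hl0 he0]
    gcongr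
    conv_rhs => rw [← Real.rpow_one l]
    exact Real.rpow_le_rpow_of_exponent_ge' hl0 hb (by norm_num) (by linarith)
  have s6 : (1 - l) ^ ρ ≤ (1 - l) ^ 2 := by
    rw [← Real.rpow_two]
    exact Real.rpow_le_rpow_of_exponent_ge' (by linarith) (by linarith) (by norm_num) hρ2
  have s7 : ‖a - b‖ ≤ (1 - l) + l * e := by
    have : a - b = (1 - l) • a + l • (a - l⁻¹ • b) := by
      rcases hl0.eq_or_lt with h | h
      · have : b = 0 := norm_eq_zero.1 (by rw [← hl, ← h])
        simp [this, ← h]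
      · rw [smul_sub, smul_smul, mul_inv_cancel₀ h.ne']; module
    rw [this]
    refine (norm_add_le _ _).trans ?_
    rw [norm_smul, norm_smul, ha, Real.norm_of_nonneg (by linarith), Real.norm_of_nonneg hl0, mul_one]
  have s8 : ‖a - b‖ ^ ρ ≤ 2 ^ (ρ - 1) * ((1 - l) ^ ρ + (l * e) ^ ρ) := by
    refine (Real.rpow_le_rpow (norm_nonneg _) s7 (by linarith)).trans ?_
    have q1 : 0 ≤ 1 - l := by linarith
    have q2 : 0 ≤ l * e := by positivity
    exact_mod_cast NNReal.rpow_add_le_mul_rpow_add_rpow ⟨1 - l, q1⟩ ⟨l * e, q2⟩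
      (show 1 ≤ ρ by linarith)
  have s9 : min k1 k2 * ((1 - l) ^ ρ + (l * e) ^ ρ) ≤ k1 * (1 - l) ^ 2 + k2 * (l * e ^ ρ) := by
    rw [mul_add]
    have : 0 ≤ (1 - l) ^ ρ := Real.rpow_nonneg (by linarith) _
    gcongr
    · exact min_le_left _ _
    · exact min_le_right _ _
  have s10 : k2 * (l * e ^ ρ) ≤ w ^ p * v := by
    rw [hk2, hv]
    calc _ = (1 / 2) ^ p * (l * (c * e ^ ρ)) := by ring
      _ ≤ _ := by gcongr
  calc _ ≤ min k1 k2 / 2 ^ (ρ - 1) * (2 ^ (ρ - 1) * ((1 - l) ^ ρ + (l * e) ^ ρ)) := by gcongr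
    _ = min k1 k2 * ((1 - l) ^ ρ + (l * e) ^ ρ) := by field_simp
    _ ≤ _ := by linarith

lemma aux_U {ρ p c R : ℝ} (hρ2 : 2 ≤ ρ) (hp : 1 < p) (hpρ : p ≤ ρ) (hc0 : 0 < c) (hR : 0 < R)
    (hc : ∀ x y : E, ‖x‖ = 1 → ‖y‖ = 1 → c * ‖x - y‖ ^ ρ ≤ 1 - ‖x + y‖ / 2) :
    ∃ k > (0 : ℝ), ∀ a b : E, ‖a‖ ≤ R → ‖b‖ ≤ R →
      k * ‖a - b‖ ^ ρ ≤ (‖a‖ ^ p + ‖b‖ ^ p) / 2 - (‖a + b‖ / 2) ^ p := by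
  obtain ⟨k, hk, H⟩ := aux_U1 hρ2 hp hc0 hc
  refine ⟨k * R ^ (p - ρ), by positivity, ?_⟩
  have main : ∀ a b : E, ‖a‖ ≤ R → ‖b‖ ≤ ‖a‖ →
      k * R ^ (p - ρ) * ‖a - b‖ ^ ρ ≤ (‖a‖ ^ p + ‖b‖ ^ p) / 2 - (‖a + b‖ / 2) ^ p := by
    intro a b ha hb
    rcases (norm_nonneg a).eq_or_lt with h | h
    · rw [← h] at hb
      have a0 : a = 0 := norm_eq_zero.1 h.symm
      have b0 : b = 0 := norm_le_zero_iff.1 hb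
      simp [a0, b0, Real.zero_rpow (show p ≠ 0 by linarith), Real.zero_rpow (show ρ ≠ 0 by linarith)]
    · set s := ‖a‖ with hs
      have n : ∀ z : E, ‖s⁻¹ • z‖ = ‖z‖ / s := by
        intro z; rw [norm_smul, norm_inv, hs, norm_norm]; ring
      have h1 := H (s⁻¹ • a) (s⁻¹ • b) (by rw [n, ← hs, div_self h.ne']) (by rw [n, div_le_one h]; exact hb)
      rw [← smul_sub, ← smul_add, n, n, n, div_right_comm, Real.div_rpow (norm_nonneg _) h.le,
        Real.div_rpow (norm_nonneg _) h.le, Real.div_rpow (by positivity) h.le] at h1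
      have h2 := mul_le_mul_of_nonneg_left h1 (show 0 ≤ s ^ p by positivity)
      have h3 : R ^ (p - ρ) ≤ s ^ (p - ρ) := Real.rpow_le_rpow_of_nonpos h ha (by linarith)
      calc _ ≤ k * s ^ (p - ρ) * ‖a - b‖ ^ ρ := by gcongr
        _ = s ^ p * (k * (‖a - b‖ ^ ρ / s ^ ρ)) := by rw [Real.rpow_sub h]; ring
        _ ≤ _ := h2
        _ = _ := by
          have : s ^ p ≠ 0 := by positivity
          field_simp
  intro a b ha hb
  rcases le_total ‖b‖ ‖a‖ with h | h
  · exact main a b ha h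
  · have := main b a hb h
    rw [norm_sub_rev, add_comm b a] at this
    linarith

lemma aux_dual {σ p C : ℝ} (hσ : 1 < σ) (hσ2 : σ ≤ 2) (hσp : σ ≤ p) (hC : 0 < C)
    (H : ∀ x h : E, 0 < ‖x‖ → ‖h‖ ≤ ‖x‖ →
      ‖x + h‖ + ‖x - h‖ ≤ 2 * ‖x‖ + 2 * C * ‖x‖ * (‖h‖ / ‖x‖) ^ σ) (x : E) :
    ‖dualityMap p x‖ ≤ ‖x‖ ^ (p - 1) ∧ dualityMap p x x = ‖x‖ ^ p ∧
      ∀ y, 0 ≤ bregmanDist p y x := by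
  have hp : 1 < p := by linarith
  have hp0 : 0 < p := by linarith
  obtain ⟨g, hg1, hgx⟩ : ∃ g : E →L[ℝ] ℝ, ‖g‖ ≤ 1 ∧ g x = ‖x‖ := by
    obtain ⟨g, h1, h2⟩ := exists_dual_vector'' ℝ x
    exact ⟨g, h1, by simpa using h2⟩
  set φ : E →L[ℝ] ℝ := ‖x‖ ^ (p - 1) • g with hφ
  have hx1 : 0 ≤ ‖x‖ ^ (p - 1) := by positivity
  have sub : ∀ y, 0 ≤ 1 / p * ‖y‖ ^ p - 1 / p * ‖x‖ ^ p - φ (y - x) := by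
    intro y
    have t := aux_tangent hp (norm_nonneg y) (norm_nonneg x)
    have h1 : g (y - x) ≤ ‖y‖ - ‖x‖ := by
      rw [map_sub, hgx]
      have : g y ≤ ‖g‖ * ‖y‖ := (le_abs_self _).trans (g.le_opNorm y)
      nlinarith [norm_nonneg y]
    have h2 : φ (y - x) ≤ ‖x‖ ^ (p - 1) * (‖y‖ - ‖x‖) := by
      simpa [hφ, mul_sub] using mul_le_mul_of_nonneg_left h1 hx1
    have h3 := mul_le_mul_of_nonneg_left t (show 0 ≤ 1 / p by positivity)
    have e : 1 / p * (‖x‖ ^ p + p * ‖x‖ ^ (p - 1) * (‖y‖ - ‖x‖)) =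
      1 / p * ‖x‖ ^ p + ‖x‖ ^ (p - 1) * (‖y‖ - ‖x‖) := by field_simp
    linarith
  have hd : HasFDerivAt (fun y : E => 1 / p * ‖y‖ ^ p) φ x := by
    obtain ⟨K, hK, hS⟩ := aux_S (R := ‖x‖ + 1) hσ hσ2 hσp hC (by positivity) H
    rw [hasFDerivAt_iff_isLittleO_nhds_zero]
    have big : (fun h : E => 1 / p * ‖x + h‖ ^ p - 1 / p * ‖x‖ ^ p - φ h) =O[𝓝 0] (fun h => ‖h‖ ^ σ) := by
      apply Asymptotics.IsBigO.of_bound (1 / p * K)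
      filter_upwards [Metric.ball_mem_nhds (0 : E) one_pos] with h hh
      rw [mem_ball_zero_iff] at hh
      have a1 := sub (x + h)
      have a2 := sub (x - h)
      have a3 := hS x h (by linarith) (by linarith [norm_nonneg x])
      have a4 := mul_le_mul_of_nonneg_left a3 (show 0 ≤ 1 / p by positivity)
      rw [add_sub_cancel_left] at a1
      rw [sub_sub_cancel_left, map_neg] at a2
      rw [Real.norm_of_nonneg a1, Real.norm_of_nonneg (by positivity)]
      linarith
    refine big.trans_isLittleO ?_
    rw [Asymptotics.isLittleO_iff]
    intro ε hε
    have T : Tendsto (fun h : E => ‖h‖ ^ (σ - 1)) (𝓝 0) (𝓝 0) := by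
      have : Continuous (fun h : E => ‖h‖ ^ (σ - 1)) :=
        continuous_norm.rpow_const (fun _ => Or.inr (by linarith))
      simpa [Real.zero_rpow (show σ - 1 ≠ 0 by linarith)] using this.tendsto 0
    filter_upwards [T.eventually_lt_const hε] with h hh
    rw [Real.norm_of_nonneg (by positivity)]
    have : ‖h‖ ^ σ = ‖h‖ ^ (σ - 1) * ‖h‖ := by
      conv_rhs => rw [← Real.rpow_one ‖h‖, ← Real.rpow_mul (norm_nonneg _), one_mul]
      rw [← Real.rpow_add_of_nonneg (norm_nonneg _) (by linarith) (by norm_num)]; ring_nf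
    rw [this]
    gcongr
  have hj : dualityMap p x = φ := hd.fderiv
  refine ⟨?_, ?_, fun y => ?_⟩
  · rw [hj, hφ, norm_smul, Real.norm_of_nonneg hx1]
    nlinarith
  · rw [hj, hφ]
    simp only [smul_apply, smul_eq_mul, hgx]
    conv_lhs => rw [← Real.rpow_one ‖x‖, ← Real.rpow_mul (norm_nonneg _), one_mul]
    rw [← Real.rpow_add_of_nonneg (norm_nonneg _) (by linarith) (by norm_num)]; ring_nf
  · rw [bregmanDist, hj]; exact sub y

lemma aux_bdd {p R : ℝ} (hp : 1 < p) (hR : 0 < R)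
    (hj : ∀ x : E, ‖dualityMap p x‖ ≤ ‖x‖ ^ (p - 1)) :
    ∃ S > (0:ℝ), ∀ x m : E, ‖x‖ ≤ R → bregmanDist p m x ≤ bregmanDist p 0 x + 1 → ‖m‖ ≤ S := by
  set B := (R ^ (p - 1) + 1) ^ (1 / (p - 1)) with hB
  have hB0 : 0 < B := by positivity
  have hBp : B ^ (p - 1) = R ^ (p - 1) + 1 := by
    rw [hB, ← Real.rpow_mul (by positivity), one_div, inv_mul_cancel₀ (by linarith), Real.rpow_one]
  refine ⟨B ^ (p - 1) * B + 1, by positivity, fun x m hx hm => ?_⟩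
  unfold bregmanDist at hm
  rw [map_sub, map_sub, map_zero, norm_zero, Real.zero_rpow (by linarith)] at hm
  have t := aux_tangent hp (norm_nonneg m) hB0.le
  have h3 := mul_le_mul_of_nonneg_left t (show 0 ≤ 1 / p by positivity)
  have e : 1 / p * (B ^ p + p * B ^ (p - 1) * (‖m‖ - B)) =
      1 / p * B ^ p + B ^ (p - 1) * (‖m‖ - B) := by field_simp
  have h4 : 0 ≤ 1 / p * B ^ p := by positivity
  have h5 : dualityMap p x m ≤ R ^ (p - 1) * ‖m‖ := by
    refine (le_abs_self _).trans (((dualityMap p x).le_opNorm m).trans ?_)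
    gcongr
    exact (hj x).trans (Real.rpow_le_rpow (norm_nonneg _) hx (by linarith))
  rw [e] at h3
  have h6 : B ^ (p - 1) * ‖m‖ = R ^ (p - 1) * ‖m‖ + ‖m‖ := by rw [hBp]; ring
  linarith

lemma aux_exists [CompleteSpace E] {p ρ S k : ℝ} (hp : 1 < p) (hρ : 0 < ρ) (hk : 0 < k)
    (hU : ∀ a b : E, ‖a‖ ≤ S → ‖b‖ ≤ S →
      k * ‖a - b‖ ^ ρ ≤ (‖a‖ ^ p + ‖b‖ ^ p) / 2 - (‖a + b‖ / 2) ^ p) (x : E)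
    (hS : ∀ m : E, bregmanDist p m x ≤ bregmanDist p 0 x + 1 → ‖m‖ ≤ S)
    (hpos : ∀ y, 0 ≤ bregmanDist p y x) (M : Submodule ℝ E) (hM : IsClosed (M : Set E)) :
    ∃ y, y ∈ (M : Set E) ∧ ∀ m ∈ (M : Set E), bregmanDist p y x ≤ bregmanDist p m x := by
  set F : E → ℝ := fun m => bregmanDist p m x with hF
  set I := sInf (F '' M) with hI
  have bb : BddBelow (F '' M) := ⟨0, by rintro _ ⟨m, -, rfl⟩; exact hpos m⟩
  have hIle : ∀ m ∈ M, I ≤ F m := fun m hm => csInf_le bb ⟨m, hm, rfl⟩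
  have hseq : ∀ n : ℕ, ∃ m ∈ M, F m < I + 1 / ((n:ℝ) + 1) := by
    intro n
    have : I < I + 1 / ((n:ℝ) + 1) := by
      have : 0 < 1 / ((n:ℝ) + 1) := by positivity
      linarith
    obtain ⟨_, ⟨m, hm, rfl⟩, h⟩ := exists_lt_of_csInf_lt (Set.Nonempty.image F ⟨0, M.zero_mem⟩) this
    exact ⟨m, hm, h⟩
  choose m hmM hmF using hseq
  have hmS : ∀ n, ‖m n‖ ≤ S := by
    intro n
    apply hS
    have h1 := hmF n
    have h2 := hIle 0 M.zero_mem
    have : 1 / ((n:ℝ) + 1) ≤ 1 := by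
      rw [div_le_one (by positivity)]
      have : (0:ℝ) ≤ n := by positivity
      linarith
    simp only [hF] at h1 h2
    linarith
  have mid : ∀ i j, k * ‖m i - m j‖ ^ ρ ≤ p * ((F (m i) + F (m j)) / 2 - I) := by
    intro i j
    have h1 := hU (m i) (m j) (hmS i) (hmS j)
    have h2 := hIle ((1 / 2 : ℝ) • (m i + m j)) (M.smul_mem _ (M.add_mem (hmM i) (hmM j)))
    have e : F ((1 / 2 : ℝ) • (m i + m j)) = (F (m i) + F (m j)) / 2 -
        1 / p * ((‖m i‖ ^ p + ‖m j‖ ^ p) / 2 - (‖m i + m j‖ / 2) ^ p) := by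
      simp only [hF, bregmanDist, map_sub, map_smul, map_add, norm_smul, smul_eq_mul]
      rw [Real.norm_of_nonneg (by norm_num), show 1 / 2 * ‖m i + m j‖ = ‖m i + m j‖ / 2 by ring]
      ring
    rw [e] at h2
    have h3 : 1 / p * ((‖m i‖ ^ p + ‖m j‖ ^ p) / 2 - (‖m i + m j‖ / 2) ^ p) ≤ (F (m i) + F (m j)) / 2 - I := by
      linarith
    rw [one_div, inv_mul_le_iff₀ (by linarith)] at h3
    linarith
  have hcau : CauchySeq m := by
    rw [Metric.cauchySeq_iff]
    intro ε hε
    obtain ⟨N, hN⟩ := exists_nat_one_div_lt (show 0 < k * ε ^ ρ / p by positivity)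
    refine ⟨N, fun i hi j hj => ?_⟩
    have hn : ∀ i ≥ N, F (m i) < I + k * ε ^ ρ / p := by
      intro i hi
      have : 1 / ((i:ℝ) + 1) ≤ 1 / ((N:ℝ) + 1) := by gcongr
      linarith [hmF i]
    have h1 : (F (m i) + F (m j)) / 2 - I < k * ε ^ ρ / p := by linarith [hn i hi, hn j hj]
    have h2 := mid i j
    rw [lt_div_iff₀ (by linarith)] at h1
    have h3 : k * ‖m i - m j‖ ^ ρ < k * ε ^ ρ := by linarith
    have h4 := lt_of_mul_lt_mul_left h3 hk.le
    rw [dist_eq_norm]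
    exact (Real.rpow_lt_rpow_iff (norm_nonneg _) hε.le hρ).1 h4
  obtain ⟨y, hy⟩ := cauchySeq_tendsto_of_complete hcau
  have hyM : y ∈ (M : Set E) := hM.mem_of_tendsto hy (Eventually.of_forall hmM)
  have hFc : Continuous F := by
    have : Continuous (fun h : E => ‖h‖ ^ p) := continuous_norm.rpow_const (fun _ => Or.inr (by linarith))
    simp only [hF, bregmanDist]
    fun_prop
  have hFI : F y ≤ I := by
    have T1 : Tendsto (fun n => F (m n)) atTop (𝓝 (F y)) := (hFc.tendsto y).comp hy
    have T2 : Tendsto (fun n : ℕ => I + 1 / ((n:ℝ) + 1)) atTop (𝓝 (I + 0)) :=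
      tendsto_const_nhds.add tendsto_one_div_add_atTop_nhds_zero_nat
    rw [add_zero] at T2
    exact le_of_tendsto_of_tendsto' T1 T2 (fun n => (hmF n).le)
  exact ⟨y, hyM, fun z hz => hFI.trans (hIle z hz)⟩

end Aux

theorem statement4 {X : Type*} [NormedAddCommGroup X] [NormedSpace ℝ X] [CompleteSpace X]
    (ρ σ p : ℝ) (hconv : PowerConvex X ρ) (hsmooth : PowerSmooth X σ)
    (hp : 1 < p) (hσp : σ ≤ p) (hpρ : p ≤ ρ)
    (M : Submodule ℝ X) (hM : IsClosed (M : Set X)) :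
    ∀ R > (0 : ℝ), ∃ C₁ > (0 : ℝ), ∃ C₂ > (0 : ℝ), ∀ x : X, ‖x‖ < R →
      Metric.infDist x (M : Set X) ≤ C₁ * (bregmanDist p (bregmanProj p (M : Set X) x) x) ^ (1 / ρ) ∧
      C₂ * (bregmanDist p (bregmanProj p (M : Set X) x) x) ^ (1 / σ) ≤ Metric.infDist x (M : Set X) := by
  obtain ⟨c, hc0, hc⟩ := aux_conv hconv
  have hσ1 : 1 < σ := hsmooth.1
  obtain ⟨C, hC0, hC⟩ := aux_smooth hsmooth
  have hC' : ∀ x h : X, 0 < ‖x‖ → ‖h‖ ≤ ‖x‖ →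
      ‖x + h‖ + ‖x - h‖ ≤ 2 * ‖x‖ + 2 * C * ‖x‖ * (‖h‖ / ‖x‖) ^ (min σ 2) := by
    intro x h hx hh
    refine (hC x h hx hh).trans ?_
    gcongr 2 * ‖x‖ + 2 * C * ‖x‖ * ?_
    exact Real.rpow_le_rpow_of_exponent_ge' (by positivity) ((div_le_one hx).2 hh)
      (by have : 1 < min σ 2 := lt_min hσ1 (by norm_num)
          linarith) (min_le_left _ _)
  have hdual := fun x : X => aux_dual (p := p) (lt_min hσ1 (by norm_num)) (min_le_right σ 2)
    ((min_le_left _ _).trans hσp) hC0 hC' x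
  have hspec : ∀ x : X, (∃ y, y ∈ (M : Set X) ∧ ∀ m ∈ (M : Set X), bregmanDist p y x ≤ bregmanDist p m x) →
      bregmanProj p (M : Set X) x ∈ (M : Set X) ∧
      ∀ m ∈ (M : Set X), bregmanDist p (bregmanProj p (M : Set X) x) x ≤ bregmanDist p m x := by
    intro x hx
    exact Classical.epsilon_spec hx
  have hself : ∀ x : X, bregmanDist p x x = 0 := by intro x; simp [bregmanDist]
  intro R hR
  by_cases hbot : ∀ m ∈ M, m = 0
  · have hq : 0 < 1 - 1 / p := by
      rw [sub_pos, div_lt_one (by linarith)]; exact hp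
    set q := 1 - 1 / p with hqd
    refine ⟨R ^ (1 - p / ρ) / q ^ (1 / ρ), by positivity, 1 / (R ^ (p / σ - 1) * q ^ (1 / σ)), by positivity, fun x hx => ?_⟩
    have h0 : bregmanProj p (M : Set X) x = 0 := hbot _ (hspec x ⟨0, M.zero_mem, fun m hm => by
      rw [hbot m hm]⟩).1
    have hM0 : (M : Set X) = {0} := by
      ext m; constructor
      · intro hm; exact hbot m hm
      · rintro rfl; exact M.zero_mem
    have hD : bregmanDist p (0 : X) x = q * ‖x‖ ^ p := by
      rw [bregmanDist, zero_sub, map_neg, (hdual x).2.1, norm_zero, Real.zero_rpow (by linarith), hqd]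
      ring
    rw [h0, hM0, Metric.infDist_singleton, dist_zero_right, hD]
    have e : ∀ s : ℝ, (q * ‖x‖ ^ p) ^ (1 / s) = q ^ (1 / s) * ‖x‖ ^ (p / s) := by
      intro s
      rw [Real.mul_rpow hq.le (by positivity), ← Real.rpow_mul (norm_nonneg _)]; ring_nf
    rw [e, e]
    have hρ0 : 0 < ρ := by linarith
    have hσ0 : 0 < σ := by linarith
    have p1 : p / ρ ≤ 1 := (div_le_one hρ0).2 hpρ
    have p2 : 1 ≤ p / σ := (one_le_div hσ0).2 hσp
    have p3 : 0 ≤ p / ρ := by positivity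
    constructor
    · calc ‖x‖ = ‖x‖ ^ (1 - p / ρ) * ‖x‖ ^ (p / ρ) := by
            rw [← Real.rpow_add_of_nonneg (norm_nonneg _) (by linarith) p3, sub_add_cancel, Real.rpow_one]
        _ ≤ R ^ (1 - p / ρ) * ‖x‖ ^ (p / ρ) := by
            gcongr
        _ = _ := by
            have : q ^ (1 / ρ) ≠ 0 := by positivity
            field_simp
    · have : ‖x‖ ^ (p / σ) ≤ R ^ (p / σ - 1) * ‖x‖ := by
        calc ‖x‖ ^ (p / σ) = ‖x‖ ^ (p / σ - 1) * ‖x‖ ^ (1 : ℝ) := by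
              rw [← Real.rpow_add_of_nonneg (norm_nonneg _) (by linarith) (by norm_num), sub_add_cancel]
          _ ≤ R ^ (p / σ - 1) * ‖x‖ ^ (1 : ℝ) := by
              gcongr
          _ = _ := by rw [Real.rpow_one]
      rw [one_div_mul_eq_div, div_le_iff₀ (by positivity)]
      calc _ ≤ q ^ (1 / σ) * (R ^ (p / σ - 1) * ‖x‖) := by gcongr
        _ = _ := by ring
  by_cases htop : ∀ x : X, x ∈ M
  · refine ⟨1, one_pos, 1, one_pos, fun x hx => ?_⟩
    have h1 := (hspec x ⟨x, htop x, fun m _ => by rw [hself]; exact (hdual x).2.2 m⟩).2 x (htop x)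
    rw [hself] at h1
    have h2 := le_antisymm h1 ((hdual x).2.2 _)
    rw [h2, Metric.infDist_zero_of_mem (show x ∈ (M : Set X) from htop x), Real.zero_rpow, Real.zero_rpow]
    · simp
    · have : σ ≠ 0 := by linarith
      positivity
    · have : ρ ≠ 0 := by linarith
      positivity
  push Not at hbot htop
  obtain ⟨y₀, hy₀M, hy₀⟩ := hbot
  obtain ⟨x₀, hx₀⟩ := htop
  have hMne : (M : Set X).Nonempty := ⟨0, M.zero_mem⟩
  have hd : 0 < Metric.infDist x₀ (M : Set X) := (hM.notMem_iff_infDist_pos hMne).1 hx₀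
  have hline : ∀ y ∈ M, ∀ t : ℝ, Metric.infDist x₀ (M : Set X) ≤ ‖x₀ + t • y‖ := by
    intro y hy t
    have := Metric.infDist_le_dist_of_mem (x := x₀) (show -(t • y) ∈ (M : Set X) from
      M.neg_mem (M.smul_mem t hy))
    rwa [dist_eq_norm, sub_neg_eq_add] at this
  have hx₀0 : 0 < ‖x₀‖ := norm_pos_iff.2 (by rintro rfl; exact hx₀ M.zero_mem)
  have hy₀0 : 0 < ‖y₀‖ := norm_pos_iff.2 hy₀
  have hρ2 : 2 ≤ ρ := aux_rho_ge (by linarith) hc0 hc x₀ y₀ hd (hline y₀ hy₀M) hy₀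
  have hσ2 : σ ≤ 2 := aux_sigma_le hσ1 hC0 hC x₀ ((3 * ‖x₀‖ / ‖y₀‖) • y₀) hd
    (hline _ (M.smul_mem _ hy₀M)) (by
      rw [norm_smul, Real.norm_of_nonneg (by positivity), div_mul_cancel₀ _ hy₀0.ne']; linarith)
  obtain ⟨S, hS0, hS⟩ := aux_bdd hp hR (fun x : X => (hdual x).1)
  obtain ⟨k, hk0, hk⟩ := aux_U (R := max S R) hρ2 hp hpρ hc0 (lt_max_of_lt_left hS0) hc
  obtain ⟨K, hK0, hK⟩ := aux_S (p := p) hσ1 hσ2 hσp hC0 hR hC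
  have hp0 : 0 < p := by linarith
  have hρ0 : 0 < ρ := by linarith
  have hσ0 : 0 < σ := by linarith
  refine ⟨(p / (2 * k)) ^ (1 / ρ), by positivity, 1 / (K / p) ^ (1 / σ), by positivity, fun x hx => ?_⟩
  obtain ⟨hyM, hymin⟩ := hspec x (aux_exists hp hρ0 hk0
    (fun a b ha hb => hk a b (ha.trans (le_max_left _ _)) (hb.trans (le_max_left _ _))) x
    (fun m hm => hS x m hx.le hm) (hdual x).2.2 M hM)
  set y := bregmanProj p (M : Set X) x with hy
  have hyS : ‖y‖ ≤ S := hS x y hx.le (by linarith [hymin 0 M.zero_mem])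
  have hD0 := (hdual x).2.2 y
  set D := bregmanDist p y x with hD
  constructor
  · have h1 := hk x y (hx.le.trans (le_max_right _ _)) (hyS.trans (le_max_left _ _))
    have h2 := (hdual x).2.2 ((1 / 2 : ℝ) • (x + y))
    have e : bregmanDist p ((1 / 2 : ℝ) • (x + y)) x = D / 2 -
        1 / p * ((‖x‖ ^ p + ‖y‖ ^ p) / 2 - (‖x + y‖ / 2) ^ p) := by
      simp only [hD, bregmanDist, map_sub, map_smul, map_add, norm_smul, smul_eq_mul]
      rw [Real.norm_of_nonneg (by norm_num), show 1 / 2 * ‖x + y‖ = ‖x + y‖ / 2 by ring]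
      ring
    rw [e] at h2
    have h3 : 1 / p * ((‖x‖ ^ p + ‖y‖ ^ p) / 2 - (‖x + y‖ / 2) ^ p) ≤ D / 2 := by linarith
    rw [one_div, inv_mul_le_iff₀ hp0] at h3
    have h4 : ‖x - y‖ ^ ρ ≤ p / (2 * k) * D := by
      rw [div_mul_eq_mul_div, le_div_iff₀ (by positivity)]; linarith
    calc _ ≤ dist x y := Metric.infDist_le_dist_of_mem hyM
      _ = (‖x - y‖ ^ ρ) ^ (1 / ρ) := by
        rw [dist_eq_norm, ← Real.rpow_mul (norm_nonneg _), mul_one_div_cancel hρ0.ne', Real.rpow_one]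
      _ ≤ (p / (2 * k) * D) ^ (1 / ρ) := Real.rpow_le_rpow (by positivity) h4 (by positivity)
      _ = _ := Real.mul_rpow (by positivity) hD0
  · apply le_of_forall_gt_imp_ge_of_dense
    intro r hr
    have hR' : Metric.infDist x (M : Set X) < R := by
      have := Metric.infDist_le_dist_of_mem (x := x) (show (0 : X) ∈ (M : Set X) from M.zero_mem)
      rw [dist_zero_right] at this
      linarith
    obtain ⟨m, hm, hmr⟩ := (Metric.infDist_lt_iff hMne).1 (lt_min hr hR')
    rw [dist_comm, dist_eq_norm, lt_min_iff] at hmr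
    have h1 := hK x (m - x) hx.le hmr.2.le
    have h2 := (hdual x).2.2 (x - (m - x))
    have h3 := hymin m hm
    have h4 : D ≤ K / p * ‖m - x‖ ^ σ := by
      have e : bregmanDist p m x + bregmanDist p (x - (m - x)) x =
          1 / p * (‖x + (m - x)‖ ^ p + ‖x - (m - x)‖ ^ p - 2 * ‖x‖ ^ p) := by
        simp only [bregmanDist, map_sub, add_sub_cancel]
        ring
      have := mul_le_mul_of_nonneg_left h1 (show 0 ≤ 1 / p by positivity)
      calc D ≤ 1 / p * (K * ‖m - x‖ ^ σ) := by linarith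
        _ = _ := by ring
    rw [one_div_mul_eq_div, div_le_iff₀ (by positivity)]
    calc D ^ (1 / σ) ≤ (K / p * ‖m - x‖ ^ σ) ^ (1 / σ) := Real.rpow_le_rpow hD0 h4 (by positivity)
      _ = (K / p) ^ (1 / σ) * ‖m - x‖ := by
        rw [Real.mul_rpow (by positivity) (by positivity), ← Real.rpow_mul (norm_nonneg _),
          mul_one_div_cancel hσ0.ne', Real.rpow_one]
      _ ≤ r * (K / p) ^ (1 / σ) := by
        rw [mul_comm]; gcongr; exact hmr.1.le
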